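/- arXiv:1203.2401 — 2 statements merged into one kernel-verified Lean document; each statement's English description precedes it below -/
import Mathlib

section
/- For natural numbers n ≥ 1 and N with N ≥ 2n, one has cos(πn/(2N)) ≥ √((N − n)/N), with equality if and only if N = 2n. (Hence for N > 2n the bound cos(πn/(2N)) is strictly stronger than Sheil-Small's bound √((N − n)/N).) -/
/-!
With `x = n / N` and `y = 1 - 2 * x`, half-angle and complement formulas give
`cos (π / 2 * x) ^ 2 - (1 - x) = (sin (π / 2 * y) - y) / 2`. Jordan's inequality, together with the
oddness of the sine, says that on `(-1, 1)` the right-hand side has the sign of `y`.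
-/

section

open Real

theorem le_sin_pi_div_two_mul_iff {y : ℝ} (hy₀ : -1 < y) (hy₁ : y ≤ 1) :
    y ≤ sin (π / 2 * y) ↔ 0 ≤ y := by
  refine ⟨fun h ↦ ?_, fun h ↦ le_sin_mul h hy₁⟩
  by_contra! hy
  have hneg : -y < sin (π / 2 * -y) := lt_sin_mul (by linarith) (by linarith)
  rw [mul_neg, sin_neg] at hneg
  linarith

theorem sin_pi_div_two_mul_eq_self_iff {y : ℝ} (hy₀ : -1 < y) (hy₁ : y < 1) :
    sin (π / 2 * y) = y ↔ y = 0 := by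
  have hneg : sin (π / 2 * y) ≤ y ↔ y ≤ 0 := by
    simpa only [mul_neg, sin_neg, neg_le_neg_iff, neg_nonneg] using
      le_sin_pi_div_two_mul_iff (y := -y) (by linarith) (by linarith)
  rw [le_antisymm_iff, hneg, le_sin_pi_div_two_mul_iff hy₀ hy₁.le, ← le_antisymm_iff]

theorem cos_sq_pi_div_two_mul (x : ℝ) :
    cos (π / 2 * x) ^ 2 = (1 + sin (π / 2 * (1 - 2 * x))) / 2 := by
  rw [cos_sq, ← cos_pi_div_two_sub (π / 2 * (1 - 2 * x))]
  ring_nf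

theorem cos_pi_div_two_mul_pos {x : ℝ} (hx₀ : -1 < x) (hx₁ : x < 1) : 0 < cos (π / 2 * x) :=
  cos_pos_of_mem_Ioo ⟨by nlinarith [pi_pos], by nlinarith [pi_pos]⟩

theorem sqrt_one_sub_le_cos_pi_div_two_mul_iff {x : ℝ} (hx₀ : 0 ≤ x) (hx₁ : x < 1) :
    √(1 - x) ≤ cos (π / 2 * x) ↔ x ≤ 1 / 2 := by
  have hcos : 0 ≤ cos (π / 2 * x) := (cos_pi_div_two_mul_pos (by linarith) hx₁).le
  calc √(1 - x) ≤ cos (π / 2 * x)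
      ↔ 1 - x ≤ (1 + sin (π / 2 * (1 - 2 * x))) / 2 := by
        rw [sqrt_le_left hcos, cos_sq_pi_div_two_mul]
    _ ↔ 1 - 2 * x ≤ sin (π / 2 * (1 - 2 * x)) := by constructor <;> intro h <;> linarith
    _ ↔ 0 ≤ 1 - 2 * x := le_sin_pi_div_two_mul_iff (by linarith) (by linarith)
    _ ↔ x ≤ 1 / 2 := by constructor <;> intro h <;> linarith

theorem cos_pi_div_two_mul_eq_sqrt_one_sub_iff {x : ℝ} (hx₀ : 0 < x) (hx₁ : x < 1) :
    cos (π / 2 * x) = √(1 - x) ↔ x = 1 / 2 := by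
  have hcos : 0 < cos (π / 2 * x) := cos_pi_div_two_mul_pos (by linarith) hx₁
  calc cos (π / 2 * x) = √(1 - x)
      ↔ (1 + sin (π / 2 * (1 - 2 * x))) / 2 = 1 - x := by
        rw [eq_comm, sqrt_eq_iff_eq_sq (by linarith) hcos.le, cos_sq_pi_div_two_mul, eq_comm]
    _ ↔ sin (π / 2 * (1 - 2 * x)) = 1 - 2 * x := by constructor <;> intro h <;> linarith
    _ ↔ 1 - 2 * x = 0 := sin_pi_div_two_mul_eq_self_iff (by linarith) (by linarith)
    _ ↔ x = 1 / 2 := by constructor <;> intro h <;> linarith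

theorem cos_ge_sqrt_sheil_small_general {a b : ℝ} (ha : 0 < a) (hab : a < b) :
    (√((b - a) / b) ≤ cos (π * a / (2 * b)) ↔ 2 * a ≤ b) ∧
      (cos (π * a / (2 * b)) = √((b - a) / b) ↔ b = 2 * a) := by
  have hb : 0 < b := ha.trans hab
  have hx₀ : 0 < a / b := div_pos ha hb
  have hx₁ : a / b < 1 := (div_lt_one hb).2 hab
  have hsqrt : (b - a) / b = 1 - a / b := by field_simp
  have hangle : π * a / (2 * b) = π / 2 * (a / b) := by field_simp
  rw [hsqrt, hangle, sqrt_one_sub_le_cos_pi_div_two_mul_iff hx₀.le hx₁,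
    cos_pi_div_two_mul_eq_sqrt_one_sub_iff hx₀ hx₁, div_le_div_iff₀ hb two_pos,
    div_eq_div_iff hb.ne' two_ne_zero, one_mul, mul_comm a 2]
  exact ⟨Iff.rfl, eq_comm⟩

end

/-- For natural numbers `n ≥ 1` and `N ≥ 2n`, one has
`cos (π n / (2N)) ≥ √((N − n)/N)`, with equality if and only if `N = 2n`. -/
theorem cos_ge_sqrt_sheil_small (n N : ℕ) (hn : 1 ≤ n) (hN : 2 * n ≤ N) :
    Real.sqrt (((N : ℝ) - n) / N) ≤ Real.cos (Real.pi * n / (2 * N)) ∧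
      (Real.cos (Real.pi * n / (2 * N)) = Real.sqrt (((N : ℝ) - n) / N) ↔ N = 2 * n) := by
  have h := cos_ge_sqrt_sheil_small_general (a := n) (b := N) (by norm_cast) (by norm_cast; lia)
  exact ⟨h.1.2 (by exact_mod_cast hN), by exact_mod_cast h.2⟩
end

section
/- For natural numbers n ≥ 1 and N with N ≥ 2n, one has cos(πn/(2N)) ≥ (1 + 16·log(N/(N − n)))^{-1}. (Hence for N ≥ 2n the bound cos(πn/(2N)) is at least as strong as the Rakhmanov–Shekhtman bound with absolute constant C = 16.) -/
/-! The graph of the concave function `t ↦ cos (π t / 2)` on `[0, 1]` lies above its chord `1 - t`.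
At `t = a / b` the chord has height `u⁻¹`, where `u = b / (b - a)`, so it suffices that
`u ≤ 1 + C log u`. Since `log u ≥ 1 - u⁻¹`, this holds as soon as `C ≥ u`; for `b ≥ 2a` one has
`u ≤ 2`. -/

section

open Real

theorem le_one_add_mul_log {C u : ℝ} (hu : 1 ≤ u) (huC : u ≤ C) : u ≤ 1 + C * log u := by
  have hu₀ : 0 < u := by linarith
  calc u = 1 + u * (1 - u⁻¹) := by field_simp; ring
    _ ≤ 1 + u * log u := by gcongr; exact one_sub_inv_le_log_of_pos hu₀
    _ ≤ 1 + C * log u := by gcongr; exact log_nonneg hu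

theorem one_sub_le_cos_pi_mul_div_two {t : ℝ} (ht₀ : 0 ≤ t) (ht₁ : t ≤ 1) :
    1 - t ≤ cos (π * t / 2) := by
  have h : 1 - 2 / π * (π * t / 2) ≤ cos (π * t / 2) :=
    one_sub_mul_le_cos (by positivity) (by gcongr; exact mul_le_of_le_one_right pi_pos.le ht₁)
  rwa [show 2 / π * (π * t / 2) = t by field_simp] at h

theorem cos_ge_rakhmanov_shekhtman_general {a b C : ℝ} (ha : 0 ≤ a) (hab : a < b)
    (hC : b / (b - a) ≤ C) :
    (1 + C * log (b / (b - a)))⁻¹ ≤ cos (π * a / (2 * b)) := by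
  have hb : 0 < b := ha.trans_lt hab
  have hba : 0 < b - a := sub_pos.mpr hab
  have hu : 1 ≤ b / (b - a) := (one_le_div hba).mpr (sub_le_self b ha)
  calc (1 + C * log (b / (b - a)))⁻¹
      ≤ (b / (b - a))⁻¹ := inv_anti₀ (by positivity) (le_one_add_mul_log hu hC)
    _ = 1 - a / b := by rw [inv_div, sub_div, div_self hb.ne']
    _ ≤ cos (π * (a / b) / 2) :=
        one_sub_le_cos_pi_mul_div_two (by positivity) ((div_le_one hb).mpr hab.le)
    _ = cos (π * a / (2 * b)) := by congr 1; field_simp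

end

/-- For natural numbers `n ≥ 1` and `N ≥ 2n`, one has
`cos (π n / (2N)) ≥ (1 + 16 log (N/(N − n)))⁻¹`. -/
theorem cos_ge_rakhmanov_shekhtman (n N : ℕ) (hn : 1 ≤ n) (hN : 2 * n ≤ N) :
    (1 + 16 * Real.log ((N : ℝ) / ((N : ℝ) - n)))⁻¹ ≤
      Real.cos (Real.pi * n / (2 * N)) := by
  obtain ⟨hn', hN'⟩ : (1 : ℝ) ≤ n ∧ 2 * (n : ℝ) ≤ N := by exact_mod_cast And.intro hn hN
  exact cos_ge_rakhmanov_shekhtman_general n.cast_nonneg (by linarith)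
    ((div_le_iff₀ (by linarith)).mpr (by linarith))
end
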